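/- Let α = 27195/9091 and γ = 11699/6806. Assume (C_w)_{w∈Λ} are nonnegative real numbers such that for every v ∈ Λ, C_v ≤ 11699, either C_v = 0 or C_v ≥ 6806, and α·C_v ≤ min_{a ∈ (A∪{ε})\{l(v)}} Σ_{b∈A, vab ∈ S^{≤p}_free} C_{Λ(vab)}. Fix any Ben strategy φ for the hard game over A, and let S_n and the weights Ŝ_n be defined from φ and (C_w) as in the context. Then for all n ≥ 1, Ŝ_{n+1} ≥ (5/2)·Ŝ_n. -/

import Mathlib

open scoped Classical

/-- `w` contains a factor that is a square of period between `lo` and `hi`. -/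
def HasSq {A : Type*} (lo hi : ℕ) (w : List A) : Prop :=
  ∃ u : List A, lo ≤ u.length ∧ u.length ≤ hi ∧ (u ++ u) <:+: w

/-- `w` is a square of period between `lo` and `hi`. -/
def IsSq {A : Type*} (lo hi : ℕ) (w : List A) : Prop :=
  ∃ u : List A, lo ≤ u.length ∧ u.length ≤ hi ∧ w = u ++ u

/-- `w` is a minimal square of period between `lo` and `hi`: it is such a square and no
proper factor of it is such a square. -/
def MinSq {A : Type*} (lo hi : ℕ) (w : List A) : Prop :=
  IsSq lo hi w ∧ ∀ f : List A, f <:+: w → f ≠ w → ¬ IsSq lo hi f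

/-- A word is normalized if it is lexicographically least among its images under
permutations of the alphabet. -/
def Normalized {A : Type*} [LinearOrder A] (w : List A) : Prop :=
  ∀ π : Equiv.Perm A, ¬ List.Lex (· < ·) (w.map π) w

/-- `Λ`: the set of normalized words that are proper prefixes of minimal squares of
period between `lo` and `hi`. -/
def Lam {A : Type*} [LinearOrder A] (lo hi : ℕ) : Set (List A) :=
  {w | Normalized w ∧ ∃ s : List A, MinSq lo hi s ∧ w <+: s ∧ w ≠ s}

/-- `Λ(w)`: the longest element of `Λ` that is, up to a permutation of the alphabet,
a suffix of `w`. -/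
noncomputable def lamOf {A : Type*} [LinearOrder A] (lo hi : ℕ) (w : List A) : List A :=
  if h : ∃ v : List A,
      (v ∈ Lam lo hi ∧ ∃ π : Equiv.Perm A, v.map π <:+ w) ∧
      ∀ v' : List A, (v' ∈ Lam lo hi ∧ ∃ π : Equiv.Perm A, v'.map π <:+ w) →
        v'.length ≤ v.length
  then h.choose else []

/-- A `2⁻`-power: a word of length at least 3 that becomes a square after appending
a suitable letter. -/
def TwoMinusPower {A : Type*} (v : List A) : Prop :=
  3 ≤ v.length ∧ ∃ a : A, ∃ u : List A, u ≠ [] ∧ v ++ [a] = u ++ u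

/-- `w` ends with a `2⁻`-power. -/
def EndsWithTMP {A : Type*} (w : List A) : Prop :=
  ∃ v : List A, v <:+ w ∧ TwoMinusPower v

/-- The conditions required of every word obtained just after one of Ann's moves in
the hard game over `Fin 6`: it is square-free, its weight `C_{Λ(u)}` (with `p = 8`)
is positive, and it does not end with a `2⁻`-power. -/
def GoodH (C : List (Fin 6) → ℝ) (u : List (Fin 6)) : Prop :=
  (∀ x : List (Fin 6), x ≠ [] → ¬ (x ++ x) <:+: u) ∧
  0 < C (lamOf 1 8 u) ∧ ¬ EndsWithTMP u

/-- `PlayableH φ C n v` : `v` is playable after Ann's `n`-th move in the hard game over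
`Fin 6` against Ben's strategy `φ` (where `φ w = none` means Ben skips his turn): there
is a sequence of `n` Ann moves, against Ben playing `φ`, producing `v` just after Ann's
`n`-th move, all of whose intermediate words after Ann's moves satisfy `GoodH`. -/
inductive PlayableH (φ : List (Fin 6) → Option (Fin 6)) (C : List (Fin 6) → ℝ) :
    ℕ → List (Fin 6) → Prop
  | base (a : Fin 6) : GoodH C [a] → PlayableH φ C 1 [a]
  | step {n : ℕ} {v : List (Fin 6)} (a : Fin 6) :
      PlayableH φ C n v → GoodH C (v ++ (φ v).toList ++ [a]) →
      PlayableH φ C (n + 1) (v ++ (φ v).toList ++ [a])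

/-- `Ŝ_n = Σ_{w ∈ Λ} C_w · |{u ∈ S_n : Λ(u) = w}| = Σ_{v ∈ S_n} C_{Λ(v)}`, where `S_n`
is the set of words playable after Ann's `n`-th move. -/
noncomputable def ShatH (φ : List (Fin 6) → Option (Fin 6)) (C : List (Fin 6) → ℝ)
    (n : ℕ) : ℝ :=
  ∑ᶠ v ∈ {v : List (Fin 6) | PlayableH φ C n v}, C (lamOf 1 8 v)

/-!
Which short squares a letter creates at the end of `u` depends only on `Λ(u)`, so the inequalities
on the coefficients transfer from `Λ` to every word free of short squares: one round multiplies the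
total weight by at least `α`, before the words ending with a `2⁻`-power are discarded. For these,
write the `2⁻`-power as `ycy` with period `k = |y| + 1`. If `k ≤ p`, Ben could create a short square
by playing `c`; this would leave Ann without continuation, so the coefficient of the word is zero.
If `k > p`, the last `k - 1` letters repeat the letters `k` places before, and Ann played at least
`⌊k / 2⌋` of the last `k` letters. Given Ben's strategy, the word is therefore determined by `k` and
by a word playable `⌊k / 2⌋` rounds earlier, of which there are few since by induction the weight
has grown by the factor `β` in each of the rounds in between. Summing the resulting geometric
series over `k > p` gives a loss of at most `α - β` times the current weight.
-/

section Words

variable {A : Type*} {lo hi : ℕ}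

theorem map_equiv_map_symm {B : Type*} (π : A ≃ B) (w : List B) : (w.map π.symm).map π = w := by
  simp

theorem map_symm_map_equiv {B : Type*} (π : A ≃ B) (w : List A) : (w.map π).map π.symm = w := by
  simp

theorem getLast?_eq_of_suffix {v w : List A} (h : v <:+ w) (hv : v ≠ []) :
    v.getLast? = w.getLast? := by
  obtain ⟨t, rfl⟩ := h
  exact (List.getLast?_append_of_ne_nil t hv).symm

theorem eq_nil_or_map_ne_getLast? {u v : List A} {π : Equiv.Perm A} (hπ : v.map π <:+ u)
    {a : Option A} (ha : a ≠ u.getLast?) : v = [] ∨ a.map π.symm ≠ v.getLast? := by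
  refine or_iff_not_imp_left.2 fun hv h => ha ?_
  rw [← getLast?_eq_of_suffix hπ (by simpa using hv), List.getLast?_map, ← h, Option.map_map]
  simp

theorem IsSq.map {w : List A} (π : Equiv.Perm A) : IsSq lo hi w → IsSq lo hi (w.map π) := by
  rintro ⟨u, hlo, hhi, rfl⟩
  exact ⟨u.map π, by simpa, by simpa, List.map_append⟩

theorem MinSq.map {w : List A} (π : Equiv.Perm A) (hw : MinSq lo hi w) :
    MinSq lo hi (w.map π) := by
  refine ⟨hw.1.map π, fun f hf hne hsq => hw.2 (f.map π.symm) ?_ ?_ (hsq.map _)⟩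
  · simpa only [map_symm_map_equiv] using hf.map π.symm
  · rintro rfl
    exact hne (map_equiv_map_symm π f).symm

theorem hasSq_iff_exists_isSq {w : List A} :
    HasSq lo hi w ↔ ∃ s, IsSq lo hi s ∧ s <:+: w :=
  ⟨fun ⟨u, hlo, hhi, h⟩ => ⟨u ++ u, ⟨u, hlo, hhi, rfl⟩, h⟩,
    fun ⟨_, ⟨u, hlo, hhi, hs⟩, h⟩ => ⟨u, hlo, hhi, hs ▸ h⟩⟩

theorem HasSq.mono {v w : List A} (hv : HasSq lo hi v) (h : v <:+: w) : HasSq lo hi w :=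
  let ⟨u, hlo, hhi, hu⟩ := hv
  ⟨u, hlo, hhi, hu.trans h⟩

theorem HasSq.map {w : List A} (π : Equiv.Perm A) (hw : HasSq lo hi w) :
    HasSq lo hi (w.map π) := by
  obtain ⟨s, hs, hsw⟩ := hasSq_iff_exists_isSq.1 hw
  exact hasSq_iff_exists_isSq.2 ⟨_, hs.map π, hsw.map π⟩

theorem hasSq_map_iff {w : List A} (π : Equiv.Perm A) :
    HasSq lo hi (w.map π) ↔ HasSq lo hi w :=
  ⟨fun h => by simpa only [map_symm_map_equiv] using h.map π.symm, HasSq.map π⟩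

theorem HasSq.exists_minSq {w : List A} (hw : HasSq lo hi w) : ∃ s, MinSq lo hi s ∧ s <:+: w := by
  obtain ⟨s, ⟨hs, hsw⟩, hmin⟩ := exists_minimalFor_of_wellFoundedLT
    (fun s => IsSq lo hi s ∧ s <:+: w) List.length (hasSq_iff_exists_isSq.1 hw)
  exact ⟨s, ⟨hs, fun f hf hne hsq =>
    hne (hf.eq_of_length_le (hmin ⟨hsq, hf.trans hsw⟩ hf.length_le))⟩, hsw⟩

end Words

section LongestSuffix

variable {A : Type*} [LinearOrder A] {lo hi : ℕ}

/-- `v ∈ Λ` is, up to a renaming of the letters, a suffix of `w`; the word `Λ(w)` is the longest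
such `v`. -/
def IsLamSuffix (lo hi : ℕ) (w v : List A) : Prop :=
  v ∈ Lam lo hi ∧ ∃ π : Equiv.Perm A, v.map π <:+ w

theorem IsLamSuffix.map {w v : List A} (π : Equiv.Perm A) (h : IsLamSuffix lo hi w v) :
    IsLamSuffix lo hi (w.map π) v := by
  obtain ⟨hv, σ, hσ⟩ := h
  exact ⟨hv, σ.trans π, by simpa only [List.map_map, Equiv.coe_trans] using hσ.map π⟩

theorem isLamSuffix_map_iff {w v : List A} (π : Equiv.Perm A) :
    IsLamSuffix lo hi (w.map π) v ↔ IsLamSuffix lo hi w v :=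
  ⟨fun h => by simpa only [map_symm_map_equiv] using h.map π.symm, IsLamSuffix.map π⟩

theorem IsLamSuffix.mono {w w' v : List A} (h : IsLamSuffix lo hi w v) (hw : w <:+ w') :
    IsLamSuffix lo hi w' v :=
  let ⟨hv, π, hπ⟩ := h
  ⟨hv, π, hπ.trans hw⟩

theorem Normalized.le_map {w : List A} (hw : Normalized w) (π : Equiv.Perm A) : w ≤ w.map π :=
  not_lt.1 (hw π)

theorem Normalized.eq_of_map_eq_map {v w : List A} (hv : Normalized v) (hw : Normalized w)
    {π σ : Equiv.Perm A} (h : v.map π = w.map σ) : v = w := by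
  have hvw : v.map (π.trans σ.symm) = w := by
    rw [Equiv.coe_trans, ← List.map_map, h, map_symm_map_equiv]
  have hwv : w.map (σ.trans π.symm) = v := by
    rw [Equiv.coe_trans, ← List.map_map, ← h, map_symm_map_equiv]
  exact le_antisymm (hvw ▸ hv.le_map _) (hwv ▸ hw.le_map _)

theorem exists_normalized_map [Finite A] (w : List A) :
    ∃ π : Equiv.Perm A, Normalized (w.map π) := by
  obtain ⟨π, hπ⟩ := Finite.exists_min fun π : Equiv.Perm A => w.map π
  refine ⟨π, fun σ => (not_lt.2 ?_ : ¬ (w.map π).map σ < w.map π)⟩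
  simpa only [List.map_map, Equiv.coe_trans] using hπ (π.trans σ)

theorem exists_map_mem_lam [Finite A] {y s : List A} (hs : MinSq lo hi s) (hys : y <+: s)
    (hne : y ≠ s) : ∃ π : Equiv.Perm A, y.map π ∈ Lam lo hi := by
  obtain ⟨π, hπ⟩ := exists_normalized_map y
  exact ⟨π, hπ, s.map π, hs.map π, hys.map π,
    fun h => hne (List.map_injective_iff.2 π.injective h)⟩

theorem length_le_of_mem_lam {v : List A} (hv : v ∈ Lam lo hi) : v.length ≤ 2 * hi := by
  obtain ⟨-, _, ⟨⟨u, -, hhi, rfl⟩, -⟩, hvs, -⟩ := hv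
  have := hvs.length_le
  rw [List.length_append] at this
  lia

theorem nil_mem_lam [Nonempty A] (hlo : 0 < lo) (hle : lo ≤ hi) : ([] : List A) ∈ Lam lo hi := by
  obtain ⟨a⟩ := ‹Nonempty A›
  let u := List.replicate lo a
  have hsq : HasSq lo hi (u ++ u) :=
    ⟨u, by simp [u], by simpa [u] using hle, List.infix_rfl⟩
  obtain ⟨s, hs, -⟩ := hsq.exists_minSq
  refine ⟨fun π => List.not_lex_nil, s, hs, List.nil_prefix, ?_⟩
  rintro rfl
  obtain ⟨⟨x, hx, -, hnil⟩, -⟩ := hs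
  rw [(List.append_eq_nil_iff.1 hnil.symm).1] at hx
  exact hlo.not_ge hx

variable [Nonempty A] [Finite A] (hlo : 0 < lo) (hle : lo ≤ hi)
include hlo hle

theorem exists_longest_isLamSuffix (w : List A) :
    ∃ v, IsLamSuffix lo hi w v ∧ ∀ v', IsLamSuffix lo hi w v' → v'.length ≤ v.length := by
  have hfin : {v | IsLamSuffix lo hi w v}.Finite :=
    (List.finite_length_le A (2 * hi)).subset fun v hv => length_le_of_mem_lam hv.1
  exact Set.exists_max_image _ List.length hfin ⟨[], nil_mem_lam hlo hle, 1, List.nil_suffix⟩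

theorem lamOf_spec (w : List A) : IsLamSuffix lo hi w (lamOf lo hi w) ∧
    ∀ v, IsLamSuffix lo hi w v → v.length ≤ (lamOf lo hi w).length := by
  have hex := exists_longest_isLamSuffix hlo hle w
  unfold IsLamSuffix at hex ⊢
  rw [lamOf, dif_pos hex]
  exact hex.choose_spec

theorem isLamSuffix_lamOf (w : List A) : IsLamSuffix lo hi w (lamOf lo hi w) :=
  (lamOf_spec hlo hle w).1

theorem IsLamSuffix.length_le_lamOf {w v : List A} (h : IsLamSuffix lo hi w v) :
    v.length ≤ (lamOf lo hi w).length :=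
  (lamOf_spec hlo hle w).2 v h

theorem lamOf_mem_lam (w : List A) : lamOf lo hi w ∈ Lam lo hi :=
  (isLamSuffix_lamOf hlo hle w).1

theorem lamOf_congr {w w' : List A} (h : ∀ v, IsLamSuffix lo hi w v ↔ IsLamSuffix lo hi w' v) :
    lamOf lo hi w = lamOf lo hi w' := by
  have hw := isLamSuffix_lamOf hlo hle w
  have hw' := (h _).2 (isLamSuffix_lamOf hlo hle w')
  have hlen : (lamOf lo hi w).length = (lamOf lo hi w').length :=
    le_antisymm (((h _).1 hw).length_le_lamOf hlo hle) (hw'.length_le_lamOf hlo hle)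
  obtain ⟨⟨hnorm, -⟩, π, hπ⟩ := hw
  obtain ⟨⟨hnorm', -⟩, σ, hσ⟩ := hw'
  refine hnorm.eq_of_map_eq_map hnorm' (π := π) (σ := σ) ?_
  have hmap_len : ((lamOf lo hi w).map π).length = ((lamOf lo hi w').map σ).length := by
    simpa only [List.length_map] using hlen
  exact (List.suffix_of_suffix_length_le hπ hσ hmap_len.le).eq_of_length hmap_len

theorem lamOf_map (π : Equiv.Perm A) (w : List A) : lamOf lo hi (w.map π) = lamOf lo hi w :=
  lamOf_congr hlo hle fun _ => isLamSuffix_map_iff π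

variable {u : List A} {π : Equiv.Perm A} (hπ : (lamOf lo hi u).map π <:+ u)
include hπ

-- Removing `c` from `y` leaves a proper prefix of a minimal square, so up to renaming an element
-- of `Λ`, and such a suffix of `u` is not longer than `Λ(u)`.
theorem suffix_lamOf_append {y s c : List A} (hs : MinSq lo hi s) (hys : y <+: s) (hc : c ≠ [])
    (hyu : y <:+ u ++ c) : y <:+ (lamOf lo hi u).map π ++ c := by
  rcases le_total y.length c.length with hlen | hlen
  · exact List.suffix_append_of_suffix
      (List.suffix_of_suffix_length_le hyu (List.suffix_append u c) hlen)
  obtain ⟨z, rfl⟩ := List.suffix_of_suffix_length_le (List.suffix_append u c) hyu hlen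
  have hzu : z <:+ u := List.suffix_append_self_iff.1 hyu
  have hzs : z <+: s := (List.prefix_append z c).trans hys
  have hne : z ≠ s := by
    rintro rfl
    exact hc (List.prefix_append_right_inj z |>.1 (by simpa using hys) |> List.prefix_nil.1)
  obtain ⟨σ, hσ⟩ := exists_map_mem_lam hs hzs hne
  have hlam : IsLamSuffix lo hi u (z.map σ) := ⟨hσ, σ.symm, by rwa [map_symm_map_equiv]⟩
  have hzlen : z.length ≤ ((lamOf lo hi u).map π).length := by
    simpa only [List.length_map] using hlam.length_le_lamOf hlo hle
  exact List.suffix_append_self_iff.2 (List.suffix_of_suffix_length_le hzu hπ hzlen)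

theorem lamOf_append {c : List A} (hc : c ≠ []) :
    lamOf lo hi (u ++ c) = lamOf lo hi ((lamOf lo hi u).map π ++ c) := by
  refine lamOf_congr hlo hle fun v => ⟨?_, fun h => h.mono (List.suffix_append_self_iff.2 hπ)⟩
  rintro ⟨hv, σ, hσ⟩
  obtain ⟨-, s, hs, hvs, -⟩ := id hv
  exact ⟨hv, σ, suffix_lamOf_append hlo hle hπ (hs.map σ) (hvs.map σ) hc hσ⟩

theorem HasSq.lamOf_append (hu : ¬ HasSq lo hi u) {c : List A} (h : HasSq lo hi (u ++ c)) :
    HasSq lo hi ((lamOf lo hi u).map π ++ c) := by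
  induction c using List.reverseRecOn with
  | nil => exact absurd (by simpa using h) hu
  | append_singleton c b ih =>
    rw [← List.append_assoc] at h ⊢
    obtain ⟨s, hs, hsu⟩ := h.exists_minSq
    rcases List.infix_concat_iff.1 hsu with hsuff | hinf
    · rw [List.append_assoc] at hsuff ⊢
      exact hasSq_iff_exists_isSq.2 ⟨s, hs.1,
        (suffix_lamOf_append hlo hle hπ hs List.prefix_rfl (by simp) hsuff).isInfix⟩
    · exact (ih (hasSq_iff_exists_isSq.2 ⟨s, hs.1, hinf⟩)).mono
        (List.prefix_append _ _).isInfix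

end LongestSuffix

section LocalGrowth

variable {A : Type*} [LinearOrder A] [Fintype A] {lo hi : ℕ} {α : ℝ} {C : List A → ℝ}

/-- The linear inequalities imposed on the coefficients: whatever letter `a` Ben appends to a word
`v ∈ Λ` (`none` if he skips his turn), the total coefficient of the continuations by Ann that are
free of short squares is at least `α * C v`. -/
def GrowsLocally (lo hi : ℕ) (α : ℝ) (C : List A → ℝ) : Prop :=
  ∀ v ∈ Lam lo hi, ∀ a : Option A, (v = [] ∨ a ≠ v.getLast?) →
    α * C v ≤ ∑ b : A,
      if ¬ HasSq lo hi (v ++ a.toList ++ [b]) then C (lamOf lo hi (v ++ a.toList ++ [b])) else 0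

variable [Nonempty A] (hlo : 0 < lo) (hle : lo ≤ hi)
include hlo hle

theorem GrowsLocally.mul_lamOf_le_sum (hgrow : GrowsLocally lo hi α C)
    (hC : ∀ v ∈ Lam lo hi, 0 ≤ C v) {u : List A} (hu : ¬ HasSq lo hi u) {a : Option A}
    (ha : a ≠ u.getLast?) :
    α * C (lamOf lo hi u) ≤
      ∑ b : A,
        if ¬ HasSq lo hi (u ++ a.toList ++ [b]) then
          C (lamOf lo hi (u ++ a.toList ++ [b]))
        else 0 := by
  obtain ⟨hv, π, hπ⟩ := isLamSuffix_lamOf hlo hle u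
  refine (hgrow _ hv _ (eq_nil_or_map_ne_getLast? hπ ha)).trans ?_
  rw [← Equiv.sum_comp π.symm]
  refine Finset.sum_le_sum fun b _ => ?_
  have hword : (lamOf lo hi u ++ (a.map π.symm).toList ++ [π.symm b]).map π =
      (lamOf lo hi u).map π ++ (a.toList ++ [b]) := by simp [Option.toList_map]
  have hlam : lamOf lo hi (lamOf lo hi u ++ (a.map π.symm).toList ++ [π.symm b]) =
      lamOf lo hi (u ++ a.toList ++ [b]) := by
    rw [List.append_assoc u, lamOf_append hlo hle hπ (by simp), ← hword, lamOf_map hlo hle]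
  have hsq (h : HasSq lo hi (u ++ a.toList ++ [b])) :
      HasSq lo hi (lamOf lo hi u ++ (a.map π.symm).toList ++ [π.symm b]) := by
    rw [List.append_assoc] at h
    rw [← hasSq_map_iff π, hword]
    exact h.lamOf_append hlo hle hπ hu
  have hnonneg := hC _ (lamOf_mem_lam hlo hle (u ++ a.toList ++ [b]))
  rw [hlam]
  split_ifs with hv_sq hu_sq hu_sq
  · exact le_rfl
  · exact hnonneg
  · exact absurd (hsq hu_sq) hv_sq
  · exact le_rfl

theorem GrowsLocally.lamOf_nonpos_of_hasSq_concat (hgrow : GrowsLocally lo hi α C)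
    (hC : ∀ v ∈ Lam lo hi, 0 ≤ C v) (hα : 0 < α) {u : List A} (hu : ¬ HasSq lo hi u) {a : A}
    (ha : some a ≠ u.getLast?) (hsq : HasSq lo hi (u ++ [a])) : C (lamOf lo hi u) ≤ 0 := by
  have hsum := hgrow.mul_lamOf_le_sum hlo hle hC hu ha
  have hdead (b : A) : HasSq lo hi (u ++ (some a).toList ++ [b]) :=
    hsq.mono (List.prefix_append _ _).isInfix
  simp only [hdead, not_true_eq_false, if_false, Finset.sum_const_zero] at hsum
  exact nonpos_of_mul_nonpos_right hsum hα

end LocalGrowth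

section TwoMinusPowers

variable {A : Type*} {u v : List A}

theorem twoMinusPower_iff : TwoMinusPower v ↔ ∃ y, y ≠ [] ∧ ∃ c, v = y ++ [c] ++ y := by
  constructor
  · rintro ⟨hlen, a, x, hx, h⟩
    obtain ⟨y, c, rfl⟩ := x.eq_nil_or_concat'.resolve_left hx
    have hv : v = y ++ [c] ++ y :=
      (List.append_inj' (by simpa using h : v ++ [a] = (y ++ [c] ++ y) ++ [c]) rfl).1
    refine ⟨y, ?_, c, hv⟩
    rintro rfl
    simp [hv] at hlen
  · rintro ⟨y, hy, c, rfl⟩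
    have := List.length_pos_iff.2 hy
    refine ⟨?_, c, y ++ [c], by simp, by simp⟩
    simp only [List.length_append, List.length_singleton]
    lia

theorem endsWithTMP_iff : EndsWithTMP u ↔ ∃ y, y ≠ [] ∧ ∃ c, y ++ [c] ++ y <:+ u := by
  simp only [EndsWithTMP, twoMinusPower_iff]
  exact ⟨fun ⟨_, h, y, hy, c, hv⟩ => ⟨y, hy, c, hv ▸ h⟩, fun ⟨y, hy, c, h⟩ => ⟨_, h, y, hy, c, rfl⟩⟩

theorem endsWithTMP_of_square_suffix {x : List A} (hx : 2 ≤ x.length) (h : x ++ x <:+ u) :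
    EndsWithTMP u := by
  obtain ⟨c, y, rfl⟩ := List.exists_cons_of_length_pos (by lia : 0 < x.length)
  refine endsWithTMP_iff.2 ⟨y, List.length_pos_iff.1 (Nat.le_of_succ_le_succ hx), c, ?_⟩
  exact List.IsSuffix.trans ⟨[c], by simp⟩ h

theorem endsWithTMP_of_square_suffix_concat {x : List A} {c : A} (hx : 2 ≤ x.length)
    (h : x ++ x <:+ u ++ [c]) : EndsWithTMP u := by
  obtain ⟨y, d, rfl⟩ := x.eq_nil_or_concat'.resolve_left
    (List.length_pos_iff.1 (by lia : 0 < x.length))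
  rw [List.length_append, List.length_singleton] at hx
  refine endsWithTMP_iff.2 ⟨y, List.length_pos_iff.1 (Nat.le_of_succ_le_succ hx), d, ?_⟩
  have h' : (y ++ [d] ++ y) ++ [d] <:+ u ++ [c] := by simpa using h
  exact ((List.suffix_append_inj_of_length_eq (s₁ := [d]) (s₂ := [c]) rfl).1 h').1

theorem getLast?_eq_some_of_square_suffix_concat {c d : A} (h : [d] ++ [d] <:+ u ++ [c]) :
    u.getLast? = some c := by
  obtain ⟨hdu, hdc⟩ := (List.suffix_append_inj_of_length_eq (s₁ := [d]) (s₂ := [c]) rfl).1 h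
  rw [← getLast?_eq_of_suffix hdu (by simp), hdc, List.getLast?_singleton]

/-- A word is square-free if it has no factor that is a nonempty square. -/
def IsSquareFree (w : List A) : Prop :=
  ∀ x : List A, x ≠ [] → ¬ (x ++ x) <:+: w

theorem IsSquareFree.not_hasSq {lo hi : ℕ} (hlo : 0 < lo) (hu : IsSquareFree u) :
    ¬ HasSq lo hi u :=
  fun ⟨x, hx, _, h⟩ => hu x (List.length_pos_iff.1 (hlo.trans_le hx)) h

theorem IsSquareFree.append_toList (hu : IsSquareFree u) (htmp : ¬ EndsWithTMP u) {a : Option A}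
    (ha : a ≠ u.getLast?) : IsSquareFree (u ++ a.toList) := by
  rcases a with - | c
  · simpa using hu
  intro x hx h
  rcases List.infix_concat_iff.1 h with hsuff | hinf
  · obtain hlen | hlen : x.length = 1 ∨ 2 ≤ x.length := by
      have := List.length_pos_iff.2 hx
      lia
    · obtain ⟨d, rfl⟩ := List.length_eq_one_iff.1 hlen
      exact ha (getLast?_eq_some_of_square_suffix_concat hsuff).symm
    · exact htmp (endsWithTMP_of_square_suffix_concat hlen hsuff)
  · exact hu x hx hinf

theorem IsSquareFree.concat {p : ℕ} (hp : 0 < p) (hu : IsSquareFree u) {b : A}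
    (hsq : ¬ HasSq 1 p (u ++ [b])) (htmp : ¬ EndsWithTMP (u ++ [b])) :
    IsSquareFree (u ++ [b]) := by
  intro x hx h
  rcases List.infix_concat_iff.1 h with hsuff | hinf
  · rcases lt_or_ge p x.length with hlen | hlen
    · exact htmp (endsWithTMP_of_square_suffix (by lia) hsuff)
    · exact hsq ⟨x, List.length_pos_iff.2 hx, hlen, h⟩
  · exact hu x hx hinf

end TwoMinusPowers

section PeriodicTails

variable {A : Type*} {k r : ℕ} {u : List A}

/-- `u` ends with a factor of period `k` and length at least `k + r`, so that each of its last `r`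
letters repeats the letter `k` places before. -/
def PeriodicTail (k r : ℕ) (u : List A) : Prop :=
  ∃ s, s <:+ u ∧ k + r ≤ s.length ∧ s.HasPeriod k

theorem periodicTail_of_suffix {y : List A} {c : A} (h : y ++ [c] ++ y <:+ u) :
    PeriodicTail (y.length + 1) y.length u := by
  refine ⟨_, h, by simp only [List.length_append, List.length_singleton]; lia, ?_⟩
  have htake : (y ++ [c] ++ y).take (y.length + 1) = y ++ [c] := List.take_left' (by simp)
  rw [List.HasPeriod, htake]
  exact ⟨[c] ++ y, by simp⟩

theorem PeriodicTail.mono {r' : ℕ} (h : PeriodicTail k r u) (hr : r' ≤ r) :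
    PeriodicTail k r' u :=
  let ⟨s, hsu, hlen, hper⟩ := h
  ⟨s, hsu, by lia, hper⟩

theorem PeriodicTail.exists_of_concat {b : A} (h : PeriodicTail k (r + 1) (u ++ [b])) :
    ∃ s, s <:+ u ∧ k + r ≤ s.length ∧ (s ++ [b]).HasPeriod k := by
  obtain ⟨s, hsu, hlen, hper⟩ := h
  rcases List.suffix_concat_iff.1 hsu with rfl | ⟨s, rfl, hs⟩
  · simp at hlen
  · exact ⟨s, hs, by simpa [← add_assoc] using hlen, hper⟩

theorem PeriodicTail.of_concat {b : A} (h : PeriodicTail k (r + 1) (u ++ [b])) :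
    PeriodicTail k r u := by
  obtain ⟨s, hsu, hlen, hper⟩ := h.exists_of_concat
  exact ⟨s, hsu, hlen, List.HasPeriod.factor (u := []) hper⟩

theorem PeriodicTail.getElem?_length_sub {b : A} (hk : 0 < k)
    (h : PeriodicTail k (r + 1) (u ++ [b])) : u[u.length - k]? = some b := by
  obtain ⟨s, ⟨t, rfl⟩, hlen, hper⟩ := h.exists_of_concat
  have hlast := List.hasPeriod_iff_getElem?.1 hper (s.length - k)
    (by simp only [List.length_append, List.length_singleton]; lia)
  rw [List.getElem?_append_left (by lia), Nat.sub_add_cancel (by lia),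
    List.getElem?_concat_length] at hlast
  rw [← hlast, List.getElem?_append_right (by simp only [List.length_append]; lia),
    List.length_append]
  congr 1
  lia

theorem PeriodicTail.of_append_toList {a : Option A}
    (h : PeriodicTail k (r + 1) (u ++ a.toList)) : PeriodicTail k r u := by
  rcases a with - | c
  · exact PeriodicTail.mono (by simpa using h) (Nat.le_succ r)
  · exact PeriodicTail.of_concat h

end PeriodicTails

section Game

variable {A : Type*} {φ : List A → Option A} {k : ℕ}

/-- The word obtained from `v` when Ben replies according to `φ` and Ann then appends `b`. -/
def playRound (φ : List A → Option A) (v : List A) (b : A) : List A :=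
  v ++ (φ v).toList ++ [b]

/-- The word obtained from `v` when Ben replies according to `φ` and Ann then repeats the letter
standing `k` places before; she appends nothing if there is no such letter. -/
def playForcedRound (φ : List A → Option A) (k : ℕ) (v : List A) : List A :=
  v ++ (φ v).toList ++ ((v ++ (φ v).toList)[(v ++ (φ v).toList).length - k]?).toList

theorem prefix_playRound (v : List A) (b : A) : v <+: playRound φ v b := by
  rw [playRound, List.append_assoc]
  exact List.prefix_append _ _

theorem length_playRound_le (v : List A) (b : A) :
    (playRound φ v b).length ≤ v.length + 2 := by
  have : (φ v).toList.length ≤ 1 := by cases φ v <;> simp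
  simp only [playRound, List.length_append, List.length_singleton]
  lia

theorem PeriodicTail.playRound_eq {r : ℕ} (hk : 0 < k) {v : List A} {b : A}
    (h : PeriodicTail k (r + 1) (playRound φ v b)) : playRound φ v b = playForcedRound φ k v := by
  rw [playForcedRound, h.getElem?_length_sub hk, playRound, Option.toList_some]

theorem PeriodicTail.of_playRound {r : ℕ} {v : List A} {b : A}
    (h : PeriodicTail k (r + 2) (playRound φ v b)) : PeriodicTail k r v :=
  h.of_concat.of_append_toList

variable [Fintype A] {G : List A → Prop}

/-- The possible outcomes of one more round, Ben replying by `φ`, from the words of `S`. -/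
noncomputable def extensions (φ : List A → Option A) (S : Finset (List A)) : Finset (List A) :=
  (S ×ˢ Finset.univ).image fun q => playRound φ q.1 q.2

/-- The words that Ann can reach with `n + 1` moves against Ben's strategy `φ`, when every word she
produces on the way has to satisfy `G`. -/
noncomputable def playable (G : List A → Prop) (φ : List A → Option A) : ℕ → Finset (List A)
  | 0 => (Finset.univ.image fun a => [a]).filter G
  | n + 1 => (extensions φ (playable G φ n)).filter G

theorem mem_extensions {S : Finset (List A)} {u : List A} :
    u ∈ extensions φ S ↔ ∃ v ∈ S, ∃ b, playRound φ v b = u := by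
  simp [extensions]

theorem mem_playable_zero {u : List A} : u ∈ playable G φ 0 ↔ (∃ a, [a] = u) ∧ G u := by
  simp [playable]

theorem mem_playable_succ {n : ℕ} {u : List A} :
    u ∈ playable G φ (n + 1) ↔ u ∈ extensions φ (playable G φ n) ∧ G u := by
  simp [playable]

theorem playable_holds {n : ℕ} {u : List A} (hu : u ∈ playable G φ n) : G u := by
  cases n with
  | zero => exact (mem_playable_zero.1 hu).2
  | succ n => exact (mem_playable_succ.1 hu).2

theorem ne_nil_of_mem_playable {n : ℕ} {u : List A} (hu : u ∈ playable G φ n) : u ≠ [] := by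
  cases n with
  | zero =>
    obtain ⟨⟨a, rfl⟩, -⟩ := mem_playable_zero.1 hu
    simp
  | succ n =>
    obtain ⟨v, -, b, rfl⟩ := mem_extensions.1 (mem_playable_succ.1 hu).1
    simp [playRound]

theorem length_le_of_mem_playable {n : ℕ} {u : List A} (hu : u ∈ playable G φ n) :
    u.length ≤ 2 * n + 1 := by
  induction n generalizing u with
  | zero =>
    obtain ⟨⟨a, rfl⟩, -⟩ := mem_playable_zero.1 hu
    simp
  | succ n ih =>
    obtain ⟨v, hv, b, rfl⟩ := mem_extensions.1 (mem_playable_succ.1 hu).1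
    have := ih hv
    have := length_playRound_le (φ := φ) v b
    lia

-- Ben's replies are determined by the word on the board, so a word determines its own history.
theorem eq_of_mem_playable_of_prefix {n : ℕ} {u v v' : List A} (hv : v ∈ playable G φ n)
    (hv' : v' ∈ playable G φ n) (h : v <+: u) (h' : v' <+: u) : v = v' := by
  suffices v.length = v'.length from
    (List.prefix_of_prefix_length_le h h' this.le).eq_of_length this
  induction n generalizing v v' with
  | zero =>
    obtain ⟨⟨a, rfl⟩, -⟩ := mem_playable_zero.1 hv
    obtain ⟨⟨a', rfl⟩, -⟩ := mem_playable_zero.1 hv'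
    rfl
  | succ n ih =>
    obtain ⟨w, hw, b, rfl⟩ := mem_extensions.1 (mem_playable_succ.1 hv).1
    obtain ⟨w', hw', b', rfl⟩ := mem_extensions.1 (mem_playable_succ.1 hv').1
    have hwu := (prefix_playRound w b).trans h
    have hwu' := (prefix_playRound w' b').trans h'
    have hlen := ih hw hw' hwu hwu'
    obtain rfl := (List.prefix_of_prefix_length_le hwu hwu' hlen.le).eq_of_length hlen
    simp [playRound]

theorem injOn_playRound (G : List A → Prop) (φ : List A → Option A) (n : ℕ) :
    Set.InjOn (fun q : List A × A => playRound φ q.1 q.2)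
      (playable G φ n ×ˢ (Finset.univ : Finset A) : Finset (List A × A)) := by
  rintro ⟨v, b⟩ hv ⟨v', b'⟩ hv' h
  simp only [Finset.mem_coe, Finset.mem_product, Finset.mem_univ, and_true] at hv hv' h
  obtain rfl : v = v' := eq_of_mem_playable_of_prefix hv hv' (prefix_playRound v b)
    (h ▸ prefix_playRound v' b')
  simpa [playRound] using h

theorem sum_extensions_playable {M : Type*} [AddCommMonoid M] (f : List A → M) (n : ℕ) :
    ∑ u ∈ extensions φ (playable G φ n), f u =
      ∑ v ∈ playable G φ n, ∑ b, f (playRound φ v b) := by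
  rw [extensions, Finset.sum_image (injOn_playRound G φ n), Finset.sum_product]

theorem exists_iterate_playForcedRound_eq (hk : 0 < k) {m j : ℕ} {u : List A}
    (hu : u ∈ extensions φ (playable G φ (m + j))) (hper : PeriodicTail k (2 * j + 1) u) :
    ∃ w ∈ playable G φ m, (playForcedRound φ k)^[j + 1] w = u := by
  induction j generalizing u with
  | zero =>
    obtain ⟨v, hv, b, rfl⟩ := mem_extensions.1 hu
    exact ⟨v, hv, (hper.playRound_eq hk).symm⟩
  | succ j ih =>
    obtain ⟨v, hv, b, rfl⟩ := mem_extensions.1 hu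
    obtain ⟨w, hw, rfl⟩ := ih (mem_playable_succ.1 hv).1 (hper.of_playRound (r := 2 * j + 1))
    exact ⟨w, hw, by rw [hper.playRound_eq hk, Function.iterate_succ_apply']⟩

end Game

section DelayedLoss

theorem sum_pow_half_le {r : ℝ} (hr : 0 ≤ r) (hr' : r < 1) (a n : ℕ) :
    ∑ i ∈ Finset.range n, r ^ ((a + i) / 2) ≤ 2 * r ^ (a / 2) / (1 - r) := by
  have hpow := pow_nonneg hr (a / 2)
  have h1r : 0 < 1 - r := sub_pos.2 hr'
  induction n using Nat.twoStepInduction generalizing a with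
  | zero => simpa only [Finset.sum_range_zero] using by positivity
  | one =>
    rw [Finset.sum_range_one, add_zero, le_div_iff₀ h1r]
    nlinarith
  | more n ih _ =>
    have htail : ∑ i ∈ Finset.range n, r ^ ((a + (i + 1 + 1)) / 2) ≤
        2 * r ^ (a / 2 + 1) / (1 - r) := by
      simpa only [add_right_comm a 2, add_assoc, Nat.add_div_right a two_pos] using
        ih (a + 2) (pow_nonneg hr _)
    have hsecond : r ^ ((a + (0 + 1)) / 2) ≤ r ^ (a / 2) :=
      pow_le_pow_of_le_one hr hr'.le (by lia)
    rw [Finset.sum_range_succ', Finset.sum_range_succ', add_zero]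
    calc _ ≤ 2 * r ^ (a / 2 + 1) / (1 - r) + r ^ (a / 2) + r ^ (a / 2) := by gcongr
      _ = 2 * r ^ (a / 2) / (1 - r) := by field_simp; ring

variable {W : ℕ → ℝ} {α β γ : ℝ} {p n : ℕ}

theorem le_inv_pow_mul_of_mul_le_succ (hβ : 0 < β) (h : ∀ m < n, β * W m ≤ W (m + 1)) {i : ℕ}
    (hi : i ≤ n) : W (n - i) ≤ β⁻¹ ^ i * W n := by
  induction i with
  | zero => simp
  | succ i ih =>
    have hstep := h (n - (i + 1)) (by lia)
    rw [show n - (i + 1) + 1 = n - i by lia] at hstep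
    rw [pow_succ', mul_assoc, le_inv_mul_iff₀ hβ]
    exact hstep.trans (ih (by lia))

theorem sum_delayed_le (hW : 0 ≤ W n) (hβ : 1 < β) (hp : 0 < p)
    (h : ∀ m < n, β * W m ≤ W (m + 1)) :
    ∑ k ∈ Finset.Ico (p + 1) (n + 3), W (n + 1 - k / 2) ≤
      2 * β * β⁻¹ ^ ((p + 1) / 2) / (1 - β⁻¹) * W n := by
  have hβ0 : 0 < β := one_pos.trans hβ
  have hterm (k : ℕ) (hk : k ∈ Finset.Ico (p + 1) (n + 3)) :
      W (n + 1 - k / 2) ≤ β * W n * β⁻¹ ^ (k / 2) := by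
    obtain ⟨hpk, hkn⟩ := Finset.mem_Ico.1 hk
    obtain ⟨i, hi⟩ : ∃ i, k / 2 = i + 1 := ⟨k / 2 - 1, by lia⟩
    rw [hi, Nat.add_sub_add_right, pow_succ]
    convert le_inv_pow_mul_of_mul_le_succ hβ0 h (i := i) (by lia) using 1
    field_simp
  calc _ ≤ ∑ k ∈ Finset.Ico (p + 1) (n + 3), β * W n * β⁻¹ ^ (k / 2) := Finset.sum_le_sum hterm
    _ = β * W n * ∑ i ∈ Finset.range (n + 3 - (p + 1)), β⁻¹ ^ ((p + 1 + i) / 2) := by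
      rw [← Finset.mul_sum, Finset.sum_Ico_eq_sum_range]
    _ ≤ β * W n * (2 * β⁻¹ ^ ((p + 1) / 2) / (1 - β⁻¹)) := by
      gcongr
      exact sum_pow_half_le (by positivity) (inv_lt_one_of_one_lt₀ hβ) _ _
    _ = _ := by ring

theorem mul_le_succ_of_delayed_loss (hW : ∀ n, 0 ≤ W n) (hβ : 1 < β) (hγ : 0 ≤ γ) (hp : 0 < p)
    (hαβ : β + γ * (2 * β * β⁻¹ ^ ((p + 1) / 2) / (1 - β⁻¹)) ≤ α)
    (hstep : ∀ n, α * W n ≤ W (n + 1) + γ * ∑ k ∈ Finset.Ico (p + 1) (n + 3), W (n + 1 - k / 2))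
    (n : ℕ) : β * W n ≤ W (n + 1) := by
  induction n using Nat.strong_induction_on with
  | _ n ih =>
    have hloss := mul_le_mul_of_nonneg_left (sum_delayed_le (hW n) hβ hp ih) hγ
    have hrate := mul_le_mul_of_nonneg_right hαβ (hW n)
    linarith [hstep n]

end DelayedLoss

section Weights

variable {A : Type*} [LinearOrder A] {p : ℕ} {α L U : ℝ} {C : List A → ℝ} {φ : List A → Option A}
  {u : List A}

/-- The condition of `GoodH`, over an arbitrary alphabet and for squares of period at most `p`. -/
def Good (p : ℕ) (C : List A → ℝ) (u : List A) : Prop :=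
  IsSquareFree u ∧ 0 < C (lamOf 1 p u) ∧ ¬ EndsWithTMP u

/-- The words with a positive coefficient that Ann gives up only because they end with a
`2⁻`-power. -/
def Lost (p : ℕ) (C : List A → ℝ) (u : List A) : Prop :=
  ¬ HasSq 1 p u ∧ 0 < C (lamOf 1 p u) ∧ EndsWithTMP u

theorem Good.playRound_good_or_lost (hp : 0 < p) {v : List A} (hv : Good p C v)
    (hφ : φ v ≠ v.getLast?) {b : A} (hsq : ¬ HasSq 1 p (playRound φ v b))
    (hpos : 0 < C (lamOf 1 p (playRound φ v b))) :
    Good p C (playRound φ v b) ∨ Lost p C (playRound φ v b) := by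
  by_cases htmp : EndsWithTMP (playRound φ v b)
  · exact Or.inr ⟨hsq, hpos, htmp⟩
  · exact Or.inl ⟨(hv.1.append_toList hv.2.2 hφ).concat hp hsq htmp, hpos, htmp⟩

theorem Good.weight_playRound_le [Finite A] [Nonempty A] (hp : 0 < p)
    (hC : ∀ v ∈ Lam 1 p, 0 ≤ C v) (hub : ∀ v ∈ Lam 1 p, C v ≤ U) {v : List A}
    (hv : Good p C v) (hφ : φ v ≠ v.getLast?) (b : A) :
    (if ¬ HasSq 1 p (playRound φ v b) then C (lamOf 1 p (playRound φ v b)) else 0) ≤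
      (if Good p C (playRound φ v b) then C (lamOf 1 p (playRound φ v b)) else 0) +
        if Lost p C (playRound φ v b) then U else 0 := by
  have hmem := lamOf_mem_lam one_pos hp (playRound φ v b)
  have hnonneg := hC _ hmem
  have hle := hub _ hmem
  have hU := hnonneg.trans hle
  have hgood : 0 ≤ if Good p C (playRound φ v b) then C (lamOf 1 p (playRound φ v b)) else 0 := by
    positivity
  have hlost : 0 ≤ if Lost p C (playRound φ v b) then U else 0 := by positivity
  by_cases hsq : HasSq 1 p (playRound φ v b)
  · rw [if_neg (not_not.2 hsq)]
    exact add_nonneg hgood hlost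
  rw [if_pos hsq]
  rcases hnonneg.eq_or_lt with hzero | hpos
  · rw [← hzero] at hgood ⊢
    exact add_nonneg hgood hlost
  rcases hv.playRound_good_or_lost hp hφ hsq hpos with h | h
  · rw [if_pos h]
    exact le_add_of_nonneg_right hlost
  · rw [if_pos h]
    exact hle.trans (le_add_of_nonneg_left hgood)

variable [Fintype A]

/-- The weight `Ŝ` of the words that Ann can reach with `n + 1` moves. -/
noncomputable def playableWeight (p : ℕ) (C : List A → ℝ) (φ : List A → Option A) (n : ℕ) : ℝ :=
  ∑ v ∈ playable (Good p C) φ n, C (lamOf 1 p v)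

theorem playableWeight_nonneg (n : ℕ) : 0 ≤ playableWeight p C φ n :=
  Finset.sum_nonneg fun _ hv => (playable_holds hv).2.1.le

variable [Nonempty A] (hp : 0 < p)
include hp

theorem GrowsLocally.lamOf_nonpos_of_suffix (hgrow : GrowsLocally 1 p α C)
    (hC : ∀ v ∈ Lam 1 p, 0 ≤ C v) (hα : 0 < α) (hu : ¬ HasSq 1 p u) {y : List A} {c : A}
    (hy : y ≠ []) (hyp : y.length < p) (h : y ++ [c] ++ y <:+ u) : C (lamOf 1 p u) ≤ 0 := by
  have hlast : some c ≠ u.getLast? := by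
    intro hc
    rw [← getLast?_eq_of_suffix ((List.suffix_append _ _).trans h) hy] at hc
    obtain ⟨z, rfl⟩ := List.getLast?_eq_some_iff.1 hc.symm
    refine hu ⟨[c], by simp, hp, List.IsInfix.trans ?_ h.isInfix⟩
    exact ⟨z, z ++ [c], by simp⟩
  refine hgrow.lamOf_nonpos_of_hasSq_concat one_pos hp hC hα hu hlast
    ⟨y ++ [c], by simp, by simpa using hyp, List.IsSuffix.isInfix ?_⟩
  simpa using (List.suffix_append_self_iff (l₃ := [c])).2 h

theorem Lost.exists_periodicTail (hgrow : GrowsLocally 1 p α C) (hC : ∀ v ∈ Lam 1 p, 0 ≤ C v)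
    (hα : 0 < α) (hu : Lost p C u) :
    ∃ k, p < k ∧ 2 * k ≤ u.length + 1 ∧ PeriodicTail k (k - 1) u := by
  obtain ⟨hsq, hpos, htmp⟩ := hu
  obtain ⟨y, hy, c, h⟩ := endsWithTMP_iff.1 htmp
  have hyp : p ≤ y.length := not_lt.1 fun hlt =>
    hpos.not_ge (hgrow.lamOf_nonpos_of_suffix hp hC hα hsq hy hlt h)
  have hlen := h.length_le
  simp only [List.length_append, List.length_singleton] at hlen
  exact ⟨y.length + 1, by lia, by lia, periodicTail_of_suffix h⟩

theorem card_lost_le (hgrow : GrowsLocally 1 p α C) (hC : ∀ v ∈ Lam 1 p, 0 ≤ C v) (hα : 0 < α)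
    (G : List A → Prop) (φ : List A → Option A) (n : ℕ) :
    ((extensions φ (playable G φ n)).filter (Lost p C)).card ≤
      ∑ k ∈ Finset.Ico (p + 1) (n + 3), (playable G φ (n + 1 - k / 2)).card := by
  calc
    _ ≤ ((Finset.Ico (p + 1) (n + 3)).biUnion fun k =>
        (playable G φ (n + 1 - k / 2)).image ((playForcedRound φ k)^[k / 2])).card := by
      refine Finset.card_le_card fun u hu => ?_
      obtain ⟨hu, hlost⟩ := Finset.mem_filter.1 hu
      obtain ⟨k, hpk, hku, hper⟩ := hlost.exists_periodicTail hp hgrow hC hα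
      have hlen : u.length ≤ 2 * n + 3 := by
        obtain ⟨v, hv, b, rfl⟩ := mem_extensions.1 hu
        exact (length_playRound_le v b).trans (by grw [length_le_of_mem_playable hv])
      obtain ⟨j, hj⟩ : ∃ j, k / 2 = j + 1 := ⟨k / 2 - 1, by lia⟩
      rw [show n = (n + 1 - k / 2) + j by lia] at hu
      obtain ⟨w, hw, rfl⟩ := exists_iterate_playForcedRound_eq (by lia) hu (hper.mono (by lia))
      simp only [Finset.mem_biUnion, Finset.mem_Ico, Finset.mem_image]
      exact ⟨k, by lia, w, hw, by rw [hj]⟩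
    _ ≤ _ := Finset.card_biUnion_le.trans (Finset.sum_le_sum fun _ _ => Finset.card_image_le)

theorem mul_playableWeight_le_add_card (hgrow : GrowsLocally 1 p α C)
    (hC : ∀ v ∈ Lam 1 p, 0 ≤ C v) (hub : ∀ v ∈ Lam 1 p, C v ≤ U)
    (hφ : ∀ v, v ≠ [] → φ v ≠ v.getLast?) (n : ℕ) :
    α * playableWeight p C φ n ≤ playableWeight p C φ (n + 1) +
      U * ((extensions φ (playable (Good p C) φ n)).filter (Lost p C)).card := by
  set E := extensions φ (playable (Good p C) φ n) with hE
  calc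
    _ = ∑ v ∈ playable (Good p C) φ n, α * C (lamOf 1 p v) := Finset.mul_sum _ _ _
    _ ≤ ∑ v ∈ playable (Good p C) φ n, ∑ b, if ¬ HasSq 1 p (playRound φ v b) then
          C (lamOf 1 p (playRound φ v b)) else 0 := Finset.sum_le_sum fun v hv =>
        hgrow.mul_lamOf_le_sum one_pos hp hC ((playable_holds hv).1.not_hasSq one_pos)
          (hφ v (ne_nil_of_mem_playable hv))
    _ = ∑ u ∈ E, if ¬ HasSq 1 p u then C (lamOf 1 p u) else 0 := by
        rw [hE, sum_extensions_playable]
    _ ≤ ∑ u ∈ E, ((if Good p C u then C (lamOf 1 p u) else 0) + if Lost p C u then U else 0) := by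
        refine Finset.sum_le_sum fun u hu => ?_
        obtain ⟨v, hv, b, rfl⟩ := mem_extensions.1 hu
        exact (playable_holds hv).weight_playRound_le hp hC hub
          (hφ v (ne_nil_of_mem_playable hv)) b
    _ = ∑ u ∈ E.filter (Good p C), C (lamOf 1 p u) + U * (E.filter (Lost p C)).card := by
        rw [Finset.sum_add_distrib, ← Finset.sum_filter, ← Finset.sum_filter, Finset.sum_const,
          nsmul_eq_mul, mul_comm U]

theorem mul_card_playable_le (hlb : ∀ v ∈ Lam 1 p, C v = 0 ∨ L ≤ C v) (n : ℕ) :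
    L * (playable (Good p C) φ n).card ≤ playableWeight p C φ n := by
  rw [mul_comm, ← nsmul_eq_mul]
  refine Finset.card_nsmul_le_sum _ _ _ fun v hv => ?_
  exact (hlb _ (lamOf_mem_lam one_pos hp v)).resolve_left (playable_holds hv).2.1.ne'

theorem mul_playableWeight_le_add_sum (hL : 0 < L) (hα : 0 < α) (hgrow : GrowsLocally 1 p α C)
    (hub : ∀ v ∈ Lam 1 p, C v ≤ U) (hlb : ∀ v ∈ Lam 1 p, C v = 0 ∨ L ≤ C v)
    (hφ : ∀ v, v ≠ [] → φ v ≠ v.getLast?) (n : ℕ) :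
    α * playableWeight p C φ n ≤ playableWeight p C φ (n + 1) +
      U / L * ∑ k ∈ Finset.Ico (p + 1) (n + 3), playableWeight p C φ (n + 1 - k / 2) := by
  have hC (v : List A) (hv : v ∈ Lam 1 p) : 0 ≤ C v :=
    (hlb v hv).elim Eq.ge hL.le.trans
  have hU : 0 ≤ U := (hC _ (nil_mem_lam one_pos hp)).trans (hub _ (nil_mem_lam one_pos hp))
  refine (mul_playableWeight_le_add_card hp hgrow hC hub hφ n).trans ?_
  rw [div_mul_eq_mul_div, mul_div_assoc, Finset.sum_div]
  gcongr
  calc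
    _ ≤ ∑ k ∈ Finset.Ico (p + 1) (n + 3), ((playable (Good p C) φ (n + 1 - k / 2)).card : ℝ) :=
      mod_cast card_lost_le hp hgrow hC hα _ φ n
    _ ≤ _ := by
      gcongr with k
      rw [le_div_iff₀' hL]
      exact mul_card_playable_le hp hlb _

-- `2 * β * β⁻¹ ^ ((p + 1) / 2) / (1 - β⁻¹)` bounds the sum of `β ^ (1 - ⌊k / 2⌋)` over the periods
-- `k > p` that can make Ann lose a word.
theorem stmt_10_general {β : ℝ} (hL : 0 < L) (hβ : 1 < β)
    (hαβ : β + U / L * (2 * β * β⁻¹ ^ ((p + 1) / 2) / (1 - β⁻¹)) ≤ α)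
    (hub : ∀ v ∈ Lam 1 p, C v ≤ U) (hlb : ∀ v ∈ Lam 1 p, C v = 0 ∨ L ≤ C v)
    (hgrow : GrowsLocally 1 p α C) (hφ : ∀ v, v ≠ [] → φ v ≠ v.getLast?) (n : ℕ) :
    β * playableWeight p C φ n ≤ playableWeight p C φ (n + 1) := by
  have hnil := nil_mem_lam (A := A) one_pos hp
  have hγ : 0 ≤ U / L :=
    div_nonneg (((hlb _ hnil).elim Eq.ge hL.le.trans).trans (hub _ hnil)) hL.le
  have h1β : 0 < 1 - β⁻¹ := sub_pos.2 (inv_lt_one_of_one_lt₀ hβ)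
  have hα : 0 < α := lt_of_lt_of_le (by positivity) hαβ
  exact mul_le_succ_of_delayed_loss playableWeight_nonneg hβ hγ hp hαβ
    (mul_playableWeight_le_add_sum hp hL hα hgrow hub hlb hφ) n

end Weights

section HardGame

variable {φ : List (Fin 6) → Option (Fin 6)} {C : List (Fin 6) → ℝ} {n : ℕ}

theorem playableH_succ_iff {v : List (Fin 6)} :
    PlayableH φ C (n + 1) v ↔ v ∈ playable (Good 8 C) φ n := by
  induction n generalizing v with
  | zero =>
    rw [mem_playable_zero]
    constructor
    · rintro (⟨a, ha⟩ | ⟨_, ⟨⟩, _⟩)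
      exact ⟨⟨a, rfl⟩, ha⟩
    · rintro ⟨⟨a, rfl⟩, ha⟩
      exact .base a ha
  | succ n ih =>
    rw [mem_playable_succ, mem_extensions]
    constructor
    · rintro (_ | ⟨b, hv, hgood⟩)
      exact ⟨⟨_, ih.1 hv, b, rfl⟩, hgood⟩
    · rintro ⟨⟨w, hw, b, rfl⟩, hgood⟩
      exact .step b (ih.2 hw) hgood

theorem shatH_succ_eq : ShatH φ C (n + 1) = playableWeight 8 C φ n := by
  simp only [ShatH, playableH_succ_iff, Finset.setOfPred_mem, finsum_mem_coe_finset, playableWeight]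

end HardGame

/-- With coefficients as in the key lemma for the hard game over `Fin 6` (`p = 8`,
`α = 27195/9091`, `γ = 11699/6806`), for any Ben strategy `φ` (never repeating the last
letter), the weights satisfy `Ŝ_{n+1} ≥ (5/2)·Ŝ_n` for all `n ≥ 1`. -/
theorem stmt_10 (C : List (Fin 6) → ℝ)
    (hnn : ∀ v ∈ Lam 1 8, 0 ≤ C v)
    (hub : ∀ v ∈ Lam 1 8, C v ≤ 11699)
    (hlb : ∀ v ∈ Lam 1 8, C v = 0 ∨ 6806 ≤ C v)
    (hmin : ∀ v ∈ Lam 1 8, ∀ a : Option (Fin 6), (v = [] ∨ a ≠ v.getLast?) →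
      (27195 / 9091 : ℝ) * C v ≤
        ∑ b : Fin 6,
          if ¬ HasSq 1 8 (v ++ a.toList ++ [b]) then
            C (lamOf 1 8 (v ++ a.toList ++ [b]))
          else 0)
    (φ : List (Fin 6) → Option (Fin 6))
    (hφ : ∀ v : List (Fin 6), v ≠ [] → φ v ≠ v.getLast?) :
    ∀ n : ℕ, 1 ≤ n → ShatH φ C (n + 1) ≥ (5 / 2 : ℝ) * ShatH φ C n := by
  intro n hn
  obtain ⟨n, rfl⟩ := Nat.exists_eq_add_of_le' hn
  rw [shatH_succ_eq, shatH_succ_eq]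
  exact stmt_10_general (by norm_num) (by norm_num) (by norm_num) (by norm_num) hub hlb hmin hφ n
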